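/- Let f : [0,∞) → ℝ be continuous and operator convex on (0,∞), and let ρ, σ ∈ M_n(ℂ) be positive semidefinite with supp ρ ⊆ supp σ. Let (K_j) be any sequence of positive semidefinite matrices with K_j → 0 such that ρ + K_j and σ + K_j are positive definite for every j. Then (σ+K_j)^{1/2} f( (σ+K_j)^{−1/2} (ρ+K_j) (σ+K_j)^{−1/2} ) (σ+K_j)^{1/2} converges, as j → ∞, to σ^{1/2} f( σ^{−1/2} ρ σ^{−1/2} ) σ^{1/2}, where σ^{−1/2} is the Moore–Penrose inverse square root of σ (inverting only the nonzero eigenvalues of σ^{1/2}). -/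

import Mathlib

open Matrix Filter
open scoped ComplexOrder

/-- Moore–Penrose power of a matrix: apply `x ↦ x ^ t` to the nonzero eigenvalues
(with `0 ^ t := 0`) via the continuous functional calculus; for `t < 0` this is the
corresponding power of the Moore–Penrose inverse. -/
noncomputable def mpow {n : ℕ} (A : Matrix (Fin n) (Fin n) ℂ) (t : ℝ) :
    Matrix (Fin n) (Fin n) ℂ :=
  cfc (fun x : ℝ => if x = 0 then 0 else x ^ t) A

/-- `f : (0,∞) → ℝ` is operator convex. -/
def OperatorConvexOn (f : ℝ → ℝ) : Prop :=
  ∀ (m : ℕ) (A B : Matrix (Fin m) (Fin m) ℂ), A.PosDef → B.PosDef →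
    ∀ t : ℝ, 0 ≤ t → t ≤ 1 →
      (t • cfc f A + (1 - t) • cfc f B - cfc f (t • A + (1 - t) • B)).PosSemidef

/-!
Write `T = σ^{-1/2}` and let `P` be the projection onto `supp σ`. As `1 + T (ρ - σ) T` agrees with
`T ρ T` on `supp σ` and preserves it, the operator perspective of `f` at `(ρ, σ)` equals
`σ^{1/2} f(1 + T (ρ - σ) T) σ^{1/2}`. Passing to `(ρ + K, σ + K)` leaves the difference `ρ - σ`,
which lives on `supp σ`, unchanged, so only `T` moves in the argument of `f`. Although
`(σ + K)^{-1/2}` may blow up, it converges to `T` on `supp σ`: as `σ ≤ σ + K`, the matrix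
`(σ + K)^{-1/2} σ^{1/2}` is a contraction, and compressing these contractions by `P` gives matrices
converging to `P`, which forces the contractions themselves to converge to `P`.
-/

section PerspectiveLimit

open scoped Topology Polynomial Matrix.Norms.L2Operator MatrixOrder

section Intertwining

lemma semiconjBy_aeval {R A : Type*} [CommSemiring R] [Semiring A] [Algebra R A] {x a b : A}
    (h : SemiconjBy x a b) (q : R[X]) :
    SemiconjBy x (Polynomial.aeval a q) (Polynomial.aeval b q) := by
  induction q using Polynomial.induction_on' with
  | add p q hp hq => simpa only [map_add] using hp.add_right hq
  | monomial k r =>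
    simp only [Polynomial.aeval_monomial]
    exact SemiconjBy.mul_right (Algebra.commutes r x).symm (h.pow_right k)

variable {𝕜 m : Type*} [RCLike 𝕜] [Fintype m] [DecidableEq m] {A B : Matrix m m 𝕜}

lemma exists_cfc_eq_aeval_and_cfc_eq_aeval (f : ℝ → ℝ) (hA : IsSelfAdjoint A)
    (hB : IsSelfAdjoint B) :
    ∃ q : ℝ[X], cfc f A = Polynomial.aeval A q ∧ cfc f B = Polynomial.aeval B q := by
  classical
  let s : Finset ℝ := A.finite_real_spectrum.toFinset ∪ B.finite_real_spectrum.toFinset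
  let q : ℝ[X] := Lagrange.interpolate s id f
  have eval_q (x : ℝ) (hx : x ∈ s) : f x = q.eval x :=
    (Lagrange.eval_interpolate_at_node f Function.injective_id.injOn hx).symm
  refine ⟨q, ?_, ?_⟩
  · rw [← cfc_polynomial q A]
    exact cfc_congr fun x hx ↦ eval_q x (by simp [s, hx])
  · rw [← cfc_polynomial q B]
    exact cfc_congr fun x hx ↦ eval_q x (by simp [s, hx])

lemma semiconjBy_cfc (f : ℝ → ℝ) (hA : IsSelfAdjoint A) (hB : IsSelfAdjoint B) {X : Matrix m m 𝕜}
    (h : SemiconjBy X A B) : SemiconjBy X (cfc f A) (cfc f B) := by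
  obtain ⟨q, hqA, hqB⟩ := exists_cfc_eq_aeval_and_cfc_eq_aeval f hA hB
  rw [hqA, hqB]
  exact semiconjBy_aeval h q

end Intertwining

section CStarAlgebra

variable {A ι : Type*} [CStarAlgebra A] [PartialOrder A] [StarOrderedRing A] {l : Filter ι}

lemma tendsto_cfc_of_nonneg {f : ℝ → ℝ} (hf : ContinuousOn f (Set.Ici 0)) {a : ι → A} {a₀ : A}
    (ha : ∀ i, 0 ≤ a i) (ha₀ : 0 ≤ a₀) (h : Tendsto a l (𝓝 a₀)) :
    Tendsto (fun i ↦ cfc f (a i)) l (𝓝 (cfc f a₀)) := by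
  have spectrum_subset {b : A} (hb : 0 ≤ b) (hb' : ‖b‖ ≤ ‖a₀‖ + 1) :
      spectrum ℝ b ⊆ Set.Icc 0 ((‖a₀‖ + 1) * ‖(1 : A)‖) := fun x hx ↦
    ⟨spectrum_nonneg_of_nonneg hb hx, (le_abs_self x).trans <|
      (spectrum.norm_le_norm_mul_of_mem hx).trans (by gcongr)⟩
  have eventually_norm_le : ∀ᶠ i in l, ‖a i‖ ≤ ‖a₀‖ + 1 :=
    h.norm.eventually_le_const (lt_add_one _)
  exact h.cfc isCompact_Icc f (eventually_norm_le.mono fun i ↦ spectrum_subset (ha i))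
    (.of_forall fun i ↦ (ha i).isSelfAdjoint) (spectrum_subset ha₀ (by simp)) ha₀.isSelfAdjoint
    (hf.mono Set.Icc_subset_Ici_self)

lemma norm_sub_starProjection_sq_le {p z : A} (hp : IsStarProjection p) (hz : ‖z‖ ≤ 1)
    (hzp : z * p = z) : ‖z - p‖ ^ 2 ≤ 2 * ‖p - p * z‖ := by
  have hpp : p * p = p := hp.isIdempotentElem
  have hps : star p = p := hp.isSelfAdjoint
  have star_mul_self_le : star z * z ≤ p := by
    have le_one : star z * z ≤ 1 := by
      rw [← CStarAlgebra.norm_le_one_iff_of_nonneg _ (star_mul_self_nonneg z),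
        CStarRing.norm_star_mul_self]
      exact mul_le_one₀ hz (norm_nonneg z) hz
    calc star z * z = p * (star z * z) * p := by
          rw [mul_assoc, mul_assoc, hzp, ← mul_assoc, ← hps, ← star_mul, hzp]
      _ ≤ p * 1 * p := hp.isSelfAdjoint.conjugate_le_conjugate le_one
      _ = p := by rw [mul_one, hpp]
  have le_compression : star (z - p) * (z - p) ≤ (p - p * z) + star (p - p * z) :=
    calc star (z - p) * (z - p) = star z * z - star z * p - p * z + p := by
          rw [star_sub, hps, sub_mul, mul_sub, mul_sub, hpp]; abel
      _ ≤ p - star z * p - p * z + p := by gcongr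
      _ = (p - p * z) + star (p - p * z) := by rw [star_sub, star_mul, hps]; abel
  calc ‖z - p‖ ^ 2 = ‖star (z - p) * (z - p)‖ := by rw [CStarRing.norm_star_mul_self, sq]
    _ ≤ ‖(p - p * z) + star (p - p * z)‖ :=
        CStarAlgebra.norm_le_norm_of_nonneg_of_le (star_mul_self_nonneg _) le_compression
    _ ≤ ‖p - p * z‖ + ‖star (p - p * z)‖ := norm_add_le _ _
    _ = 2 * ‖p - p * z‖ := by rw [norm_star, two_mul]

lemma tendsto_of_tendsto_starProjection_mul {p : A} (hp : IsStarProjection p) {z : ι → A}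
    (hz : ∀ i, ‖z i‖ ≤ 1) (hzp : ∀ i, z i * p = z i) (h : Tendsto (fun i ↦ p * z i) l (𝓝 p)) :
    Tendsto z l (𝓝 p) := by
  have sq_tendsto_zero : Tendsto (fun i ↦ ‖z i - p‖ ^ 2) l (𝓝 0) := by
    refine squeeze_zero (fun _ ↦ sq_nonneg _)
      (fun i ↦ norm_sub_starProjection_sq_le hp (hz i) (hzp i)) ?_
    simpa using (h.const_sub p).norm.const_mul 2
  rw [tendsto_iff_norm_sub_tendsto_zero]
  simpa using sq_tendsto_zero.sqrt

end CStarAlgebra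

lemma mulVec_eq_zero_of_le {𝕜 m : Type*} [RCLike 𝕜] [Fintype m] {A B : Matrix m m 𝕜} (hA : 0 ≤ A)
    (hAB : A ≤ B) {v : m → 𝕜} (hv : B *ᵥ v = 0) : A *ᵥ v = 0 := by
  rw [← hA.posSemidef.dotProduct_mulVec_zero_iff]
  refine le_antisymm ?_ (hA.posSemidef.dotProduct_mulVec_nonneg v)
  simpa [sub_mulVec, hv] using (Matrix.le_iff.mp hAB).dotProduct_mulVec_nonneg v

section MoorePenrosePower

variable {n : ℕ} {ρ σ τ : Matrix (Fin n) (Fin n) ℂ}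

lemma isSelfAdjoint_mpow (σ : Matrix (Fin n) (Fin n) ℂ) (t : ℝ) : IsSelfAdjoint (mpow σ t) :=
  cfc_predicate _ _

lemma mpow_mul_mpow (hσ : 0 ≤ σ) (s t : ℝ) : mpow σ s * mpow σ t = mpow σ (s + t) := by
  rw [mpow, mpow, mpow, ← cfc_mul _ _ σ (σ.finite_real_spectrum.continuousOn _)
    (σ.finite_real_spectrum.continuousOn _)]
  refine cfc_congr fun x hx ↦ ?_
  have x_nonneg : 0 ≤ x := spectrum_nonneg_of_nonneg hσ hx
  split_ifs with hx0
  · rw [mul_zero]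
  · rw [Real.rpow_add (x_nonneg.lt_of_ne' hx0)]

lemma mpow_one (hσ : 0 ≤ σ) : mpow σ 1 = σ := by
  conv_rhs => rw [← cfc_id' ℝ σ hσ.isSelfAdjoint]
  refine cfc_congr fun x _ ↦ ?_
  split_ifs with hx0
  · exact hx0.symm
  · exact Real.rpow_one x

-- Since `mpow` sends the eigenvalue `0` to `0`, `mpow σ 0` projects onto the support of `σ`.
lemma isStarProjection_mpow_zero (hσ : 0 ≤ σ) : IsStarProjection (mpow σ 0) where
  isIdempotentElem := by rw [IsIdempotentElem, mpow_mul_mpow hσ, add_zero]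
  isSelfAdjoint := isSelfAdjoint_mpow σ 0

lemma mul_mpow_zero_of_ker_le {m : Type*} {X : Matrix m (Fin n) ℂ} (hσ : 0 ≤ σ)
    (h : ∀ v, σ *ᵥ v = 0 → X *ᵥ v = 0) : X * mpow σ 0 = X := by
  have σ_mul : σ * (1 - mpow σ 0) = 0 := by
    nth_rw 1 [← mpow_one hσ]
    rw [mul_sub, mpow_mul_mpow hσ, add_zero, mul_one, sub_self]
  have X_mul : X * (1 - mpow σ 0) = 0 := by
    ext i k
    exact congrFun (h ((1 - mpow σ 0).col k) (funext fun j ↦ congrFun (congrFun σ_mul j) k)) i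
  rw [Matrix.mul_sub, Matrix.mul_one, sub_eq_zero] at X_mul
  exact X_mul.symm

lemma mpow_zero_mul_of_ker_le {X : Matrix (Fin n) (Fin n) ℂ} (hX : IsSelfAdjoint X) (hσ : 0 ≤ σ)
    (h : ∀ v, σ *ᵥ v = 0 → X *ᵥ v = 0) : mpow σ 0 * X = X := by
  have := congrArg star (mul_mpow_zero_of_ker_le hσ h)
  rwa [star_mul, hX.star_eq, (isSelfAdjoint_mpow σ 0).star_eq] at this

lemma mpow_zero_mul_mpow_of_le (hσ : 0 ≤ σ) (hστ : σ ≤ τ) (t : ℝ) :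
    mpow τ 0 * mpow σ t = mpow σ t := by
  have absorb : mpow τ 0 * σ = σ := mpow_zero_mul_of_ker_le hσ.isSelfAdjoint (hσ.trans hστ)
    fun _ ↦ mulVec_eq_zero_of_le hσ hστ
  have factor : mpow σ t = σ * mpow σ (t - 1) := by
    nth_rw 2 [← mpow_one hσ]
    rw [mpow_mul_mpow hσ, add_sub_cancel]
  rw [factor, ← mul_assoc, absorb]

lemma mpow_neg_half_mul_self_mul_mpow_neg_half (hσ : 0 ≤ σ) :
    mpow σ (-(1 / 2)) * σ * mpow σ (-(1 / 2)) = mpow σ 0 := by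
  nth_rw 2 [← mpow_one hσ]
  rw [mpow_mul_mpow hσ, mpow_mul_mpow hσ]
  norm_num

lemma norm_mpow_neg_half_mul_mpow_half_le_one (hσ : 0 ≤ σ) (hστ : σ ≤ τ) :
    ‖mpow τ (-(1 / 2)) * mpow σ (1 / 2)‖ ≤ 1 := by
  have hτ : 0 ≤ τ := hσ.trans hστ
  set Z := mpow τ (-(1 / 2)) * mpow σ (1 / 2)
  have mul_star_le_one : Z * star Z ≤ 1 :=
    calc Z * star Z
        = mpow τ (-(1 / 2)) * (mpow σ (1 / 2) * mpow σ (1 / 2)) * mpow τ (-(1 / 2)) := by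
          rw [star_mul, (isSelfAdjoint_mpow _ _).star_eq, (isSelfAdjoint_mpow _ _).star_eq]
          simp only [Z, mul_assoc]
      _ = mpow τ (-(1 / 2)) * σ * mpow τ (-(1 / 2)) := by
          rw [mpow_mul_mpow hσ, add_halves, mpow_one hσ]
      _ ≤ mpow τ (-(1 / 2)) * τ * mpow τ (-(1 / 2)) :=
          (isSelfAdjoint_mpow τ _).conjugate_le_conjugate hστ
      _ = mpow τ 0 := mpow_neg_half_mul_self_mul_mpow_neg_half hτ
      _ ≤ 1 := (isStarProjection_mpow_zero hτ).le_one
  rw [← CStarAlgebra.norm_le_one_iff_of_nonneg _ (mul_star_self_nonneg Z),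
    CStarRing.norm_self_mul_star, ← sq] at mul_star_le_one
  exact (sq_le_one_iff₀ (norm_nonneg Z)).mp mul_star_le_one

variable {ι : Type*} {l : Filter ι} {T : ι → Matrix (Fin n) (Fin n) ℂ}

lemma tendsto_mpow_half (hT : ∀ i, 0 ≤ T i) (hσ : 0 ≤ σ) (h : Tendsto T l (𝓝 σ)) :
    Tendsto (fun i ↦ mpow (T i) (1 / 2)) l (𝓝 (mpow σ (1 / 2))) := by
  refine tendsto_cfc_of_nonneg (Real.continuous_sqrt.continuousOn.congr fun x _ ↦ ?_) hT hσ h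
  dsimp only
  split_ifs with hx0
  · rw [hx0, Real.sqrt_zero]
  · rw [Real.sqrt_eq_rpow]

lemma tendsto_mpow_neg_half_mul_mpow_half (hσ : 0 ≤ σ) (hT : ∀ i, σ ≤ T i)
    (h : Tendsto T l (𝓝 σ)) :
    Tendsto (fun i ↦ mpow (T i) (-(1 / 2)) * mpow σ (1 / 2)) l (𝓝 (mpow σ 0)) := by
  have hT₀ (i : ι) : 0 ≤ T i := hσ.trans (hT i)
  set Z : ι → Matrix (Fin n) (Fin n) ℂ := fun i ↦ mpow (T i) (-(1 / 2)) * mpow σ (1 / 2)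
  have norm_Z_le (i : ι) : ‖Z i‖ ≤ 1 := norm_mpow_neg_half_mul_mpow_half_le_one hσ (hT i)
  have Z_mul (i : ι) : Z i * mpow σ 0 = Z i := by
    rw [mul_assoc, mpow_mul_mpow hσ, add_zero]
  have sqrt_mul_Z (i : ι) : mpow (T i) (1 / 2) * Z i = mpow σ (1 / 2) := by
    rw [← mul_assoc, mpow_mul_mpow (hT₀ i), add_neg_cancel,
      mpow_zero_mul_mpow_of_le hσ (hT i)]
  have error_tendsto : Tendsto (fun i ↦ (mpow σ (1 / 2) - mpow (T i) (1 / 2)) * Z i) l (𝓝 0) := by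
    have sqrt_sub_tendsto : Tendsto (fun i ↦ mpow σ (1 / 2) - mpow (T i) (1 / 2)) l (𝓝 0) := by
      simpa using (tendsto_mpow_half hT₀ hσ h).const_sub (mpow σ (1 / 2))
    exact squeeze_zero_norm (fun i ↦ (norm_mul_le _ _).trans
      (mul_le_of_le_one_right (norm_nonneg _) (norm_Z_le i))) (by simpa using sqrt_sub_tendsto.norm)
  have compression_eq (i : ι) : mpow σ 0 * Z i =
      mpow σ 0 + mpow σ (-(1 / 2)) * ((mpow σ (1 / 2) - mpow (T i) (1 / 2)) * Z i) := by
    rw [sub_mul, sqrt_mul_Z, mul_sub, ← mul_assoc (mpow σ _) (mpow σ _) (Z i),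
      mpow_mul_mpow hσ, neg_add_cancel, add_sub_cancel]
  refine tendsto_of_tendsto_starProjection_mul (isStarProjection_mpow_zero hσ) norm_Z_le Z_mul ?_
  simpa [compression_eq] using (error_tendsto.const_mul (mpow σ (-(1 / 2)))).const_add (mpow σ 0)

lemma tendsto_mpow_neg_half_mul_mpow_zero (hσ : 0 ≤ σ) (hT : ∀ i, σ ≤ T i)
    (h : Tendsto T l (𝓝 σ)) :
    Tendsto (fun i ↦ mpow (T i) (-(1 / 2)) * mpow σ 0) l (𝓝 (mpow σ (-(1 / 2)))) := by
  have := (tendsto_mpow_neg_half_mul_mpow_half hσ hT h).mul_const (mpow σ (-(1 / 2)))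
  simpa only [mul_assoc, mpow_mul_mpow hσ, add_neg_cancel, zero_add] using this

lemma tendsto_mpow_neg_half_conj {D : Matrix (Fin n) (Fin n) ℂ} (hσ : 0 ≤ σ) (hT : ∀ i, σ ≤ T i)
    (h : Tendsto T l (𝓝 σ)) (hD : IsSelfAdjoint D) (hker : ∀ v, σ *ᵥ v = 0 → D *ᵥ v = 0) :
    Tendsto (fun i ↦ mpow (T i) (-(1 / 2)) * D * mpow (T i) (-(1 / 2))) l
      (𝓝 (mpow σ (-(1 / 2)) * D * mpow σ (-(1 / 2)))) := by
  have conj_eq (i : ι) : mpow (T i) (-(1 / 2)) * mpow σ 0 * D *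
      star (mpow (T i) (-(1 / 2)) * mpow σ 0) =
      mpow (T i) (-(1 / 2)) * D * mpow (T i) (-(1 / 2)) := by
    rw [star_mul, (isSelfAdjoint_mpow _ _).star_eq, (isSelfAdjoint_mpow _ _).star_eq,
      mul_assoc _ _ D, mpow_zero_mul_of_ker_le hD hσ hker, ← mul_assoc, mul_assoc _ D,
      mul_mpow_zero_of_ker_le hσ hker]
  have restricted := tendsto_mpow_neg_half_mul_mpow_zero hσ hT h
  simpa only [conj_eq, (isSelfAdjoint_mpow _ _).star_eq] using
    (restricted.mul_const D).mul restricted.star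

end MoorePenrosePower

section OperatorPerspective

variable {n : ℕ} {ρ σ : Matrix (Fin n) (Fin n) ℂ}

/-- The operator perspective `σ^{1/2} f(σ^{-1/2} ρ σ^{-1/2}) σ^{1/2}` of `f` at `(ρ, σ)`, the
common form of the perturbed matrices and of their limit. As `σ^{-1/2}` is the Moore–Penrose inverse
square root, `σ` may be singular. -/
noncomputable def operatorPerspective (f : ℝ → ℝ) (ρ σ : Matrix (Fin n) (Fin n) ℂ) :
    Matrix (Fin n) (Fin n) ℂ :=
  mpow σ (1 / 2) * cfc f (mpow σ (-(1 / 2)) * ρ * mpow σ (-(1 / 2))) * mpow σ (1 / 2)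

lemma one_add_mpow_neg_half_conj_sub (hσ : 0 ≤ σ) :
    1 + mpow σ (-(1 / 2)) * (ρ - σ) * mpow σ (-(1 / 2)) =
      mpow σ (-(1 / 2)) * ρ * mpow σ (-(1 / 2)) + (1 - mpow σ 0) := by
  rw [mul_sub, sub_mul, mpow_neg_half_mul_self_mul_mpow_neg_half hσ]
  abel

lemma one_add_mpow_neg_half_conj_sub_nonneg (hρ : 0 ≤ ρ) (hσ : 0 ≤ σ) :
    0 ≤ 1 + mpow σ (-(1 / 2)) * (ρ - σ) * mpow σ (-(1 / 2)) := by
  rw [one_add_mpow_neg_half_conj_sub hσ]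
  exact add_nonneg ((isSelfAdjoint_mpow σ _).conjugate_nonneg hρ)
    (isStarProjection_mpow_zero hσ).one_sub.nonneg

lemma operatorPerspective_eq_conj_cfc_one_add (f : ℝ → ℝ) (hρ : 0 ≤ ρ) (hσ : 0 ≤ σ) :
    operatorPerspective f ρ σ = mpow σ (1 / 2) *
      cfc f (1 + mpow σ (-(1 / 2)) * (ρ - σ) * mpow σ (-(1 / 2))) * mpow σ (1 / 2) := by
  set X := mpow σ (-(1 / 2)) * ρ * mpow σ (-(1 / 2)) with hX
  set Y := 1 + mpow σ (-(1 / 2)) * (ρ - σ) * mpow σ (-(1 / 2))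
  have Y_eq : Y = X + (1 - mpow σ 0) := one_add_mpow_neg_half_conj_sub hσ
  have X_selfAdjoint : IsSelfAdjoint X :=
    ((isSelfAdjoint_mpow σ _).conjugate_nonneg hρ).isSelfAdjoint
  have Y_selfAdjoint : IsSelfAdjoint Y :=
    (one_add_mpow_neg_half_conj_sub_nonneg hρ hσ).isSelfAdjoint
  have intertwines : SemiconjBy (mpow σ 0) Y X := by
    rw [SemiconjBy, Y_eq, mul_add, mul_sub, mul_one, mpow_mul_mpow hσ, add_zero, sub_self, add_zero,
      hX, mul_assoc _ (mpow σ _) (mpow σ 0), mpow_mul_mpow hσ, ← mul_assoc, ← mul_assoc,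
      mpow_mul_mpow hσ, add_zero, zero_add]
  calc mpow σ (1 / 2) * cfc f X * mpow σ (1 / 2)
      = mpow σ (1 / 2) * (cfc f X * mpow σ 0) * mpow σ (1 / 2) := by
        simp only [mul_assoc, mpow_mul_mpow hσ, zero_add]
    _ = mpow σ (1 / 2) * (mpow σ 0 * cfc f Y) * mpow σ (1 / 2) := by
        rw [(semiconjBy_cfc f Y_selfAdjoint X_selfAdjoint intertwines).eq]
    _ = mpow σ (1 / 2) * cfc f Y * mpow σ (1 / 2) := by
        rw [← mul_assoc (mpow σ (1 / 2)) (mpow σ 0), mpow_mul_mpow hσ, add_zero]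

theorem stmt12_general {ι : Type*} {l : Filter ι} {f : ℝ → ℝ} (hf : ContinuousOn f (Set.Ici 0))
    (hρ : ρ.PosSemidef) (hσ : σ.PosSemidef) (hker : ∀ v, σ *ᵥ v = 0 → ρ *ᵥ v = 0)
    {K : ι → Matrix (Fin n) (Fin n) ℂ} (hK : ∀ i, (K i).PosSemidef) (hKlim : Tendsto K l (𝓝 0)) :
    Tendsto (fun i ↦ operatorPerspective f (ρ + K i) (σ + K i)) l
      (𝓝 (operatorPerspective f ρ σ)) := by
  have hρK (i : ι) : 0 ≤ ρ + K i := (hρ.add (hK i)).nonneg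
  have hσK (i : ι) : 0 ≤ σ + K i := (hσ.add (hK i)).nonneg
  have σ_le (i : ι) : σ ≤ σ + K i := le_add_of_nonneg_right (hK i).nonneg
  have perturbed_tendsto : Tendsto (fun i ↦ σ + K i) l (𝓝 σ) := by
    simpa using hKlim.const_add σ
  have sub_ker (v : Fin n → ℂ) (hv : σ *ᵥ v = 0) : (ρ - σ) *ᵥ v = 0 := by
    rw [sub_mulVec, hker v hv, hv, sub_zero]
  have sqrt_tendsto := tendsto_mpow_half hσK hσ.nonneg perturbed_tendsto
  have conj_tendsto := (tendsto_mpow_neg_half_conj hσ.nonneg σ_le perturbed_tendsto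
    (hρ.isHermitian.sub hσ.isHermitian) sub_ker).const_add 1
  have conj_nonneg (i : ι) :
      0 ≤ 1 + mpow (σ + K i) (-(1 / 2)) * (ρ - σ) * mpow (σ + K i) (-(1 / 2)) := by
    simpa using one_add_mpow_neg_half_conj_sub_nonneg (hρK i) (hσK i)
  have cfc_tendsto := tendsto_cfc_of_nonneg hf conj_nonneg
    (one_add_mpow_neg_half_conj_sub_nonneg hρ.nonneg hσ.nonneg) conj_tendsto
  simp only [operatorPerspective_eq_conj_cfc_one_add f (hρK _) (hσK _),
    operatorPerspective_eq_conj_cfc_one_add f hρ.nonneg hσ.nonneg, add_sub_add_right_eq_sub]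
  exact (sqrt_tendsto.mul cfc_tendsto).mul sqrt_tendsto

end OperatorPerspective

end PerspectiveLimit

/-- for `f` continuous on `[0,∞)` and operator convex on `(0,∞)`, and
positive semidefinite `ρ, σ` with `supp ρ ⊆ supp σ`, the perturbed operator perspectives
`P_f(ρ+K_j, σ+K_j)` converge to `σ^{1/2} f(σ^{-1/2} ρ σ^{-1/2}) σ^{1/2}` along any
sequence of positive semidefinite perturbations `K_j → 0` keeping both arguments
positive definite. -/
theorem stmt12 {n : ℕ} (f : ℝ → ℝ) (hcont : ContinuousOn f (Set.Ici (0 : ℝ)))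
    (hf : OperatorConvexOn f) (ρ σ : Matrix (Fin n) (Fin n) ℂ)
    (hρ : ρ.PosSemidef) (hσ : σ.PosSemidef)
    (hsupp : ∀ v : Fin n → ℂ, σ *ᵥ v = 0 → ρ *ᵥ v = 0)
    (K : ℕ → Matrix (Fin n) (Fin n) ℂ) (hK : ∀ j, (K j).PosSemidef)
    (hKlim : Filter.Tendsto K Filter.atTop (nhds 0))
    (hpd : ∀ j, (ρ + K j).PosDef ∧ (σ + K j).PosDef) :
    Filter.Tendsto
      (fun j =>
        mpow (σ + K j) (1/2) *
          cfc f (mpow (σ + K j) (-(1/2)) * (ρ + K j) * mpow (σ + K j) (-(1/2))) *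
          mpow (σ + K j) (1/2))
      Filter.atTop
      (nhds (mpow σ (1/2) *
        cfc f (mpow σ (-(1/2)) * ρ * mpow σ (-(1/2))) * mpow σ (1/2))) :=
  stmt12_general hcont hρ hσ hsupp hK hKlim
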